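/- arXiv:2603.17098 — 2 statements merged into one kernel-verified Lean document; each statement's English description precedes it below -/
import Mathlib

section
/- (Theorem 1: shift invariance of the max-centered dGHM matrix.) Let M ≥ 2 be an integer, let Q be any M×M real matrix, and let F be an M×M real matrix, all indexed cyclically by ZMod M. Suppose F attains its maximal value at a unique position (r_max, c_max) (row r_max, column c_max), and define the max-centered dGHM matrix A*_max(F) = A*_{c_max, r_max}(F), where the pivot of any matrix with a unique maximal entry is the (column, row) position of that entry. Then for all c, r in ZMod M, A*_max(F^{[c,r]}) = A*_max(F); that is, the operator A*_max is invariant under arbitrary wrap-shifts of the input. -/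
/-!
The pivot follows the maximum, so a wrap-shift of `F` by `(c, r)` moves the pivot by `(c, r)` as
well. The factors of `Q^{[r₀,0]} * F * (Qᵀ)^{[0,c₀]}` are then shifted by `r` along the first
summation index and by `c` along the second, and a sum over a cyclic index does not see a
translation.
-/

open Matrix

/-- The wrap-shift of an `M × M` matrix `F` (indexed cyclically by `ZMod M`)
by `(c, r)`: columns are shifted cyclically by `c` and rows by `r`, i.e.
`F^{[c,r]} (i, j) = F (i - r, j - c)`. -/
def wrapShift {M : ℕ} {α : Type*} (F : Matrix (ZMod M) (ZMod M) α) (c r : ZMod M) :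
    Matrix (ZMod M) (ZMod M) α :=
  fun i j => F (i - r) (j - c)

/-- The pivoted dGHM matrix of `F` for pivot position `(c, r)`:
`A*_{c,r}(F) = (4 / (M-1)^2) • Q^{[r,0]} * F * (Qᵀ)^{[0,c]}`. -/
noncomputable def dGHM {M : ℕ} [NeZero M] (Q : Matrix (ZMod M) (ZMod M) ℝ)
    (c r : ZMod M) (F : Matrix (ZMod M) (ZMod M) ℝ) : Matrix (ZMod M) (ZMod M) ℝ :=
  (4 / ((M : ℝ) - 1) ^ 2) • (wrapShift Q r 0 * F * wrapShift Qᵀ 0 c)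

/-- `F` attains its maximal value at the unique position `(i₀, j₀)`
(row `i₀`, column `j₀`). -/
def IsUniqueMax {M : ℕ} (F : Matrix (ZMod M) (ZMod M) ℝ) (i₀ j₀ : ZMod M) : Prop :=
  ∀ i j : ZMod M, (i, j) ≠ (i₀, j₀) → F i j < F i₀ j₀

section WrapShift

variable {M : ℕ} {α : Type*}

lemma wrapShift_zero_zero (A : Matrix (ZMod M) (ZMod M) α) : wrapShift A 0 0 = A := by
  ext i j
  simp only [wrapShift, sub_zero]

lemma wrapShift_wrapShift (A : Matrix (ZMod M) (ZMod M) α) (c r c' r' : ZMod M) :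
    wrapShift (wrapShift A c r) c' r' = wrapShift A (c + c') (r + r') := by
  ext i j
  simp only [wrapShift, sub_sub, add_comm]

lemma wrapShift_eq_submatrix (A : Matrix (ZMod M) (ZMod M) α) (c r : ZMod M) :
    wrapShift A c r = A.submatrix (Equiv.subRight r) (Equiv.subRight c) :=
  rfl

lemma wrapShift_mul_wrapShift [NeZero M] [Mul α] [AddCommMonoid α]
    (A B : Matrix (ZMod M) (ZMod M) α) (c r s : ZMod M) :
    wrapShift A s r * wrapShift B c s = wrapShift (A * B) c r := by
  simp only [wrapShift_eq_submatrix, submatrix_mul_equiv]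

end WrapShift

lemma dGHM_wrapShift {M : ℕ} [NeZero M] (Q F : Matrix (ZMod M) (ZMod M) ℝ)
    (c₀ r₀ c r : ZMod M) :
    dGHM Q c₀ r₀ (wrapShift F c r) = dGHM Q (c₀ - c) (r₀ - r) F := by
  have hQ : wrapShift Q r₀ 0 = wrapShift (wrapShift Q (r₀ - r) 0) r 0 := by
    rw [wrapShift_wrapShift, sub_add_cancel, add_zero]
  have hQT : wrapShift Qᵀ 0 c₀ = wrapShift (wrapShift Qᵀ 0 (c₀ - c)) 0 c := by
    rw [wrapShift_wrapShift, sub_add_cancel, add_zero]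
  rw [dGHM, dGHM, hQ, hQT, wrapShift_mul_wrapShift, wrapShift_mul_wrapShift, wrapShift_zero_zero]

section UniqueMax

variable {M : ℕ} {F : Matrix (ZMod M) (ZMod M) ℝ}

lemma isUniqueMax_wrapShift {c r i₀ j₀ : ZMod M} :
    IsUniqueMax (wrapShift F c r) i₀ j₀ ↔ IsUniqueMax F (i₀ - r) (j₀ - c) := by
  refine (Equiv.subRight r).forall_congr fun {i} => (Equiv.subRight c).forall_congr fun {j} => ?_
  simp only [wrapShift, Equiv.subRight_apply, ne_eq, Prod.mk.injEq, sub_left_inj]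

lemma IsUniqueMax.unique {i₀ j₀ i₁ j₁ : ZMod M} (h₀ : IsUniqueMax F i₀ j₀)
    (h₁ : IsUniqueMax F i₁ j₁) : i₀ = i₁ ∧ j₀ = j₁ := by
  by_contra hne
  have hne' : (i₀, j₀) ≠ (i₁, j₁) := mt Prod.mk.inj hne
  exact lt_asymm (h₁ _ _ hne') (h₀ _ _ hne'.symm)

end UniqueMax

/-- Theorem 1: the max-centered dGHM matrix `A*_max` is invariant under arbitrary
wrap-shifts of the input.  Here the max-centered dGHM matrix of a matrix with a
unique maximal entry at row `i₀`, column `j₀` is `A*_{j₀, i₀}`, i.e. its pivot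
is the (column, row) position of the unique maximal entry. -/
theorem dGHM_maxCentered_shift_invariant {M : ℕ} [NeZero M] (hM : 2 ≤ M)
    (Q F : Matrix (ZMod M) (ZMod M) ℝ) (rmax cmax : ZMod M)
    (hF : IsUniqueMax F rmax cmax)
    (c r : ZMod M) (r' c' : ZMod M)
    (hF' : IsUniqueMax (wrapShift F c r) r' c') :
    dGHM Q c' r' (wrapShift F c r) = dGHM Q cmax rmax F := by
  obtain ⟨rfl, rfl⟩ := hF.unique (isUniqueMax_wrapShift.mp hF')
  exact dGHM_wrapShift Q F c' r' c r
end

section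
/- (Orthogonality of physicists' Hermite polynomials with Gaussian weight.) For all natural numbers p and q, ∫_ℝ H_p(x) · H_q(x) · exp(−x²) dx = 2^p · p! · √π if p = q, and 0 if p ≠ q, where H_p is the physicists' Hermite polynomial of order p. -/
/-!
By Rodrigues' formula `H q * exp (-x²)` is, up to sign, the `q`-th derivative of the Gaussian, so
integrating by parts `q` times turns `∫ f * H q * exp (-x²)` into `∫ f⁽q⁾ * exp (-x²)` for every
polynomial `f`; there are no boundary terms because of the Gaussian decay. If `f` has degree at
most `q`, then `f⁽q⁾` is the constant `q! * a`, with `a` the coefficient of `X ^ q` in `f`. By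
symmetry we may take `f = H p` with `p ≤ q`, and then `a` is `2 ^ p` or `0` according to whether
`p = q` or `p < q`.
-/

open Real MeasureTheory

/-- The physicists' Hermite polynomial of order `p`, via the Rodrigues formula
`H_p(x) = (-1)^p * exp(x^2) * (d^p/dx^p) exp(-x^2)`. -/
noncomputable def hermiteH (p : ℕ) (x : ℝ) : ℝ :=
  (-1 : ℝ) ^ p * Real.exp (x ^ 2) * iteratedDeriv p (fun t : ℝ => Real.exp (-t ^ 2)) x

open Polynomial

section PhysHermite

variable {R : Type*} [Ring R]

variable (R) in
/-- The physicists' Hermite polynomials as formal polynomials. The recursion is the one satisfied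
by the polynomial factor of the successive derivatives of `exp (-x²)`, with the sign `(-1) ^ n`
removed. Mathlib's `Polynomial.hermite` is the probabilists' normalization. -/
noncomputable def physHermite : ℕ → R[X]
  | 0 => 1
  | n + 1 => 2 * (X * physHermite n) - derivative (physHermite n)

lemma physHermite_zero : physHermite R 0 = 1 := rfl

lemma physHermite_succ (n : ℕ) :
    physHermite R (n + 1) = 2 * (X * physHermite R n) - derivative (physHermite R n) := rfl

lemma coeff_physHermite_of_lt {n k : ℕ} (hnk : n < k) : (physHermite R n).coeff k = 0 := by
  induction n generalizing k with
  | zero => simp [physHermite_zero, coeff_one, hnk.ne']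
  | succ n ih =>
    obtain ⟨k, rfl⟩ := Nat.exists_eq_add_one_of_ne_zero (Nat.ne_zero_of_lt hnk)
    rw [physHermite_succ, coeff_sub, coeff_ofNat_mul, coeff_X_mul, coeff_derivative,
      ih (by lia), ih (by lia), mul_zero, zero_mul, sub_zero]

lemma coeff_physHermite_self (n : ℕ) : (physHermite R n).coeff n = 2 ^ n := by
  induction n with
  | zero => simp [physHermite_zero]
  | succ n ih =>
    rw [physHermite_succ, coeff_sub, coeff_ofNat_mul, coeff_X_mul, coeff_derivative, ih,
      coeff_physHermite_of_lt (by lia), zero_mul, sub_zero, pow_succ']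

lemma natDegree_physHermite_le (n : ℕ) : (physHermite R n).natDegree ≤ n :=
  natDegree_le_iff_coeff_eq_zero.2 fun _ ↦ coeff_physHermite_of_lt

end PhysHermite

lemma iterate_derivative_eq_C_of_natDegree_le {R : Type*} [Semiring R] {f : R[X]} {n : ℕ}
    (hf : f.natDegree ≤ n) : derivative^[n] f = C (n.factorial * f.coeff n) := by
  have hdeg : (derivative^[n] f).natDegree ≤ 0 :=
    (natDegree_iterate_derivative f n).trans (by lia)
  rw [eq_C_of_natDegree_le_zero hdeg, coeff_iterate_derivative, zero_add, Nat.descFactorial_self,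
    nsmul_eq_mul]

lemma hasDerivAt_eval_mul_exp_neg_mul_sq (b : ℝ) (f : ℝ[X]) (x : ℝ) :
    HasDerivAt (fun t ↦ f.eval t * exp (-b * t ^ 2))
      (-((C (2 * b) * (X * f) - derivative f).eval x * exp (-b * x ^ 2))) x := by
  have hexp : HasDerivAt (fun t ↦ exp (-b * t ^ 2)) (exp (-b * x ^ 2) * (-b * (2 * x))) x := by
    simpa using ((hasDerivAt_pow 2 x).const_mul (-b)).exp
  refine ((f.hasDerivAt x).mul hexp).congr_deriv ?_
  simp only [eval_sub, eval_mul, eval_C, eval_X]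
  ring

lemma integrable_eval_mul_exp_neg_mul_sq {b : ℝ} (hb : 0 < b) (f : ℝ[X]) :
    Integrable fun x ↦ f.eval x * exp (-b * x ^ 2) := by
  induction f using Polynomial.induction_on' with
  | add f g hf hg =>
    simp only [eval_add, add_mul]
    exact hf.add hg
  | monomial n a =>
    have hn : (-1 : ℝ) < n := neg_one_lt_zero.trans_le n.cast_nonneg
    simpa [eval_monomial, mul_assoc] using
      (integrable_rpow_mul_exp_neg_mul_sq hb hn).const_mul a

lemma integral_eval_mul_sub_derivative_mul_exp_neg_mul_sq {b : ℝ} (hb : 0 < b) (f g : ℝ[X]) :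
    ∫ x, (f * (C (2 * b) * (X * g) - derivative g)).eval x * exp (-b * x ^ 2) =
      ∫ x, (derivative f * g).eval x * exp (-b * x ^ 2) := by
  have hintegrable := integrable_eval_mul_exp_neg_mul_sq hb
  have hsplit : C (2 * b) * (X * (f * g)) - derivative (f * g) =
      f * (C (2 * b) * (X * g) - derivative g) - derivative f * g := by
    rw [derivative_mul]
    ring
  have hzero := integral_eq_zero_of_hasDerivAt_of_integrable
    (hasDerivAt_eval_mul_exp_neg_mul_sq b (f * g)) (hintegrable _).neg (hintegrable _)
  simp only [hsplit, eval_sub (q := derivative f * g), sub_mul, integral_neg, neg_eq_zero] at hzero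
  rwa [integral_sub (hintegrable _) (hintegrable _), sub_eq_zero] at hzero

lemma iteratedDeriv_exp_neg_sq (n : ℕ) :
    iteratedDeriv n (fun x : ℝ ↦ exp (-x ^ 2)) =
      fun x ↦ (-1) ^ n * ((physHermite ℝ n).eval x * exp (-x ^ 2)) := by
  induction n with
  | zero => simp [physHermite_zero]
  | succ n ih =>
    ext x
    have hderiv : HasDerivAt (fun t ↦ (physHermite ℝ n).eval t * exp (-t ^ 2))
        (-((physHermite ℝ (n + 1)).eval x * exp (-x ^ 2))) x := by
      simpa [physHermite_succ] using
        hasDerivAt_eval_mul_exp_neg_mul_sq 1 (physHermite ℝ n) x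
    rw [iteratedDeriv_succ, ih, (hderiv.const_mul _).deriv, pow_succ]
    ring

lemma hermiteH_eq_eval_physHermite (n : ℕ) (x : ℝ) : hermiteH n x = (physHermite ℝ n).eval x := by
  have hsign : (-1 : ℝ) ^ n * (-1) ^ n = 1 := by rw [← mul_pow, neg_one_mul, neg_neg, one_pow]
  have hexp : exp (x ^ 2) * exp (-x ^ 2) = 1 := by rw [← exp_add, add_neg_cancel, exp_zero]
  rw [hermiteH, iteratedDeriv_exp_neg_sq]
  linear_combination (physHermite ℝ n).eval x * (exp (x ^ 2) * exp (-x ^ 2) * hsign + hexp)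

lemma integral_eval_mul_physHermite (f : ℝ[X]) (n : ℕ) :
    ∫ x, (f * physHermite ℝ n).eval x * exp (-x ^ 2) =
      ∫ x, (derivative^[n] f).eval x * exp (-x ^ 2) := by
  induction n generalizing f with
  | zero => simp [physHermite_zero]
  | succ n ih =>
    calc ∫ x, (f * physHermite ℝ (n + 1)).eval x * exp (-x ^ 2)
      _ = ∫ x, (derivative f * physHermite ℝ n).eval x * exp (-x ^ 2) := by
        simpa [physHermite_succ] using
          integral_eval_mul_sub_derivative_mul_exp_neg_mul_sq one_pos f (physHermite ℝ n)
      _ = ∫ x, (derivative^[n + 1] f).eval x * exp (-x ^ 2) := ih (derivative f)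

lemma integral_eval_mul_physHermite_of_natDegree_le {f : ℝ[X]} {n : ℕ} (hf : f.natDegree ≤ n) :
    ∫ x, (f * physHermite ℝ n).eval x * exp (-x ^ 2) = n.factorial * f.coeff n * √π := by
  have hgauss : ∫ x, exp (-x ^ 2) = √π := by simpa using integral_gaussian 1
  simp only [integral_eval_mul_physHermite, iterate_derivative_eq_C_of_natDegree_le hf, eval_C,
    integral_const_mul, hgauss]

/-- Orthogonality of the physicists' Hermite polynomials with Gaussian weight:
`∫ H_p(x) H_q(x) exp(-x²) dx = 2^p p! √π` if `p = q`, and `0` otherwise. -/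
theorem hermiteH_orthogonal (p q : ℕ) :
    ∫ x : ℝ, hermiteH p x * hermiteH q x * Real.exp (-x ^ 2) =
      if p = q then 2 ^ p * (p.factorial : ℝ) * Real.sqrt π else 0 := by
  wlog hpq : p ≤ q generalizing p q
  · have hne : p ≠ q := fun h ↦ hpq h.le
    simpa only [mul_comm (hermiteH q _), if_neg hne, if_neg hne.symm] using
      this q p (le_of_not_ge hpq)
  have hdeg := (natDegree_physHermite_le (R := ℝ) p).trans hpq
  simp only [hermiteH_eq_eval_physHermite, ← eval_mul,
    integral_eval_mul_physHermite_of_natDegree_le hdeg]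
  split_ifs with h
  · rw [← h, coeff_physHermite_self, mul_comm (p.factorial : ℝ)]
  · rw [coeff_physHermite_of_lt (hpq.lt_of_ne h), mul_zero, zero_mul]
end
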